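/- Let x be a rational number whose numerator and denominator (in lowest terms) are both odd, and let k(x) be the least natural number t such that T^[t](x) is an integer. Then the final c-series term, the integer T^[k(x)](x), is odd. -/

import Mathlib

/-- The even-rounded floor `c(x)`: equal to `x` if `x` is an integer; otherwise
`⌊x⌋` if `⌊x⌋` is even and `⌊x⌋ + 1` if `⌊x⌋` is odd. -/
noncomputable def evenFloor (x : ℚ) : ℤ :=
  if x.den = 1 then x.num
  else if Even ⌊x⌋ then ⌊x⌋ else ⌊x⌋ + 1

/-- The step map of the even continued fraction (c-series) expansion:
`T x = (x - c x)⁻¹` if `x` is not an integer, and `T x = 0` otherwise. -/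
noncomputable def stepMap (x : ℚ) : ℚ :=
  if x.den = 1 then 0 else (x - evenFloor x)⁻¹

/-!
The rationals with odd numerator and odd denominator are stable under inversion and under
subtracting an even integer. At a non-integer the step map subtracts an even integer and inverts,
so this parity class is preserved until an integer is first reached.
-/

/-- The parity class `odd / odd` of a rational number in lowest terms: the invariant of the even
continued fraction algorithm. -/
structure OddOdd (x : ℚ) : Prop where
  odd_num : Odd x.num
  odd_den : Odd x.den

theorem OddOdd.num_ne_zero {x : ℚ} (hx : OddOdd x) : x.num ≠ 0 := by
  intro hzero
  exact Int.not_odd_zero (hzero ▸ hx.odd_num)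

theorem OddOdd.inv {x : ℚ} (hx : OddOdd x) : OddOdd x⁻¹ where
  odd_num := by
    rw [Rat.num_inv]
    exact (Int.odd_sign_iff.2 hx.num_ne_zero).mul (mod_cast hx.odd_den)
  odd_den := by
    rw [Rat.den_inv, if_neg hx.num_ne_zero]
    exact hx.odd_num.natAbs

theorem rat_sub_intCast_num (x : ℚ) (n : ℤ) : (x - n).num = x.num - n * x.den := by
  have hmul : ((x - n).num : ℚ) = x.num - n * x.den := by
    calc ((x - n).num : ℚ) = (x - n) * (x - n).den := (Rat.mul_den_eq_num _).symm
      _ = x * x.den - n * x.den := by rw [Rat.sub_intCast_den, sub_mul]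
      _ = x.num - n * x.den := by rw [Rat.mul_den_eq_num]
  exact_mod_cast hmul

theorem OddOdd.sub_even {x : ℚ} (hx : OddOdd x) {n : ℤ} (hn : Even n) :
    OddOdd (x - n) where
  odd_num := by
    rw [rat_sub_intCast_num]
    exact hx.odd_num.sub_even (hn.mul_right _)
  odd_den := by
    rw [Rat.sub_intCast_den]
    exact hx.odd_den

theorem even_evenFloor {x : ℚ} (hx : x.den ≠ 1) : Even (evenFloor x) := by
  rw [evenFloor, if_neg hx]
  split_ifs with hfloor
  · exact hfloor
  · exact (Int.not_even_iff_odd.1 hfloor).add_one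

theorem oddOdd_stepMap {x : ℚ} (hx : OddOdd x) (hden : x.den ≠ 1) : OddOdd (stepMap x) := by
  rw [stepMap, if_neg hden]
  exact (hx.sub_even (even_evenFloor hden)).inv

theorem oddOdd_iterate_stepMap {x : ℚ} (hx : OddOdd x) {t : ℕ}
    (ht : ∀ s < t, (stepMap^[s] x).den ≠ 1) : OddOdd (stepMap^[t] x) := by
  induction t with
  | zero => exact hx
  | succ t ih =>
    rw [Function.iterate_succ_apply']
    exact oddOdd_stepMap (ih fun s hs ↦ ht s (hs.trans t.lt_add_one)) (ht t t.lt_add_one)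

/-- If `x.num` and `x.den` are both odd, then with `k x` the least `t` with
`T^[t] x` an integer, the final c-series term (the integer `T^[k x] x`) is odd. -/
theorem final_term_odd_of_odd_odd (x : ℚ) (hnum : Odd x.num) (hden : Odd x.den)
    (k : ℕ) (hk : k = sInf {t : ℕ | (stepMap^[t] x).den = 1}) :
    Odd (stepMap^[k] x).num := by
  have hbefore : ∀ s < k, (stepMap^[s] x).den ≠ 1 := by
    intro s hs
    exact Nat.notMem_of_lt_sInf (s := {t | (stepMap^[t] x).den = 1}) (hs.trans_eq hk)
  exact (oddOdd_iterate_stepMap ⟨hnum, hden⟩ hbefore).odd_num
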